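/- Fix λ ∈ ℝ, let ξ : ℤ → ℝ and let n, ℓ ≥ 1 be integers. Then (2 − λξ_0)·(ξ_n − vec{ξ}_n^ℓ + ξ_{−n} − lvec{ξ}_{−n}^ℓ) = −Lφ_{n,ℓ}(ξ), where vec{ξ}_n^ℓ = (ξ_{n+1} + ⋯ + ξ_{n+ℓ})/ℓ and lvec{ξ}_{−n}^ℓ = (ξ_{−n−1} + ⋯ + ξ_{−n−ℓ})/ℓ. -/

import Mathlib

open scoped BigOperators

/-- The configuration obtained from `ξ` by exchanging the values at sites `y` and `y+1`. -/
def swapConf (ξ : ℤ → ℝ) (y : ℤ) : ℤ → ℝ :=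
  fun x => if x = y then ξ (y + 1) else if x = y + 1 then ξ y else ξ x

/-- The shifted configuration `(θ_k ξ)_x = ξ_{x+k}`. -/
def shiftConf (k : ℤ) (ξ : ℤ → ℝ) : ℤ → ℝ := fun x => ξ (x + k)

/-- Generator of the environment seen from the walk. -/
noncomputable def envGen (lam : ℝ) (f : (ℤ → ℝ) → ℝ) (ξ : ℤ → ℝ) : ℝ :=
  (∑' y : ℤ, (f (swapConf ξ y) - f ξ)) +
    (1 - lam * ξ 0) * (f (shiftConf 1 ξ) + f (shiftConf (-1) ξ) - 2 * f ξ)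

/-- `φ_{n,ℓ}(ξ) := Σ_{j=0}^{ℓ−1} ((ℓ−j)/ℓ) Σ_{x=−n−j}^{n+j} ξ_x`. -/
noncomputable def phiFun (n ℓ : ℕ) (ξ : ℤ → ℝ) : ℝ :=
  ∑ j ∈ Finset.range ℓ,
    (((ℓ : ℝ) - (j : ℝ)) / (ℓ : ℝ)) *
      ∑ x ∈ Finset.Icc (-(n : ℤ) - (j : ℤ)) ((n : ℤ) + (j : ℤ)), ξ x

/-!
The coordinate maps are continuous for the product topology, and summing `swapConf ξ y - ξ` over all
bonds `y` gives the discrete Laplacian of `ξ`, which is also `θ₁ξ + θ₋₁ξ - 2ξ`. Hence both parts of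
the generator act on a continuous linear functional `f` through the same number `f (Δξ)`, and
`Lf(ξ) = (2 - λξ₀) f (Δξ)`. For `f = φ_{n,ℓ}` each inner sum over `[-n-j, n+j]` telescopes to the
increment `g (j + 1) - g j` of `g j = ξ_{n+j} + ξ_{-n-j}`, and the weights `(ℓ - j)/ℓ` turn these
increments, by summation by parts, into the average of `g` over `1, …, ℓ` minus `g 0`.
-/

/-- The second difference `Δξ` of a function on `ℤ`, through which both parts of the generator act.
It is written as the sum of the differences along the two bonds at `x`. -/
def discreteLaplacian {G : Type*} [AddCommGroup G] (ξ : ℤ → G) (x : ℤ) : G :=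
  (ξ (x + 1) - ξ x) + (ξ (x - 1) - ξ x)

lemma shiftConf_one_add_shiftConf_neg_one (ξ : ℤ → ℝ) :
    shiftConf 1 ξ + shiftConf (-1) ξ = discreteLaplacian ξ + (2 : ℝ) • ξ := by
  ext x
  simp only [shiftConf, discreteLaplacian, Pi.add_apply, Pi.smul_apply, smul_eq_mul,
    ← sub_eq_add_neg]
  ring

lemma swapConf_apply_sub (ξ : ℤ → ℝ) (y x : ℤ) :
    swapConf ξ y x - ξ x =
      (if y = x then ξ (x + 1) - ξ x else 0) + (if y = x - 1 then ξ (x - 1) - ξ x else 0) := by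
  unfold swapConf
  by_cases hright : y = x
  · simp [hright, show x ≠ x - 1 by lia]
  · by_cases hleft : y = x - 1
    · simp [hleft, show x ≠ x - 1 by lia]
    · simp [hright, hleft, Ne.symm hright, show x ≠ y + 1 by lia]

lemma hasSum_swapConf_sub (ξ : ℤ → ℝ) :
    HasSum (fun y => swapConf ξ y - ξ) (discreteLaplacian ξ) := by
  refine Pi.hasSum.2 fun x => ?_
  simp only [Pi.sub_apply, swapConf_apply_sub]
  exact (hasSum_ite_eq x _).add (hasSum_ite_eq (x - 1) _)

theorem envGen_continuousLinearMap (lam : ℝ) (f : (ℤ → ℝ) →L[ℝ] ℝ) (ξ : ℤ → ℝ) :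
    envGen lam f ξ = (2 - lam * ξ 0) * f (discreteLaplacian ξ) := by
  have exchange_part : ∑' y, (f (swapConf ξ y) - f ξ) = f (discreteLaplacian ξ) := by
    simpa only [map_sub] using (f.hasSum (hasSum_swapConf_sub ξ)).tsum_eq
  have shift_part :
      f (shiftConf 1 ξ) + f (shiftConf (-1) ξ) - 2 * f ξ = f (discreteLaplacian ξ) := by
    rw [← map_add, shiftConf_one_add_shiftConf_neg_one, map_add, map_smul, smul_eq_mul,
      add_sub_cancel_right]
  rw [envGen, exchange_part, shift_part]
  ring

/-- The functional `phiFun n ℓ`, bundled as a continuous linear map for the product topology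
so that `envGen_continuousLinearMap` applies to it. -/
noncomputable def phiCLM (n ℓ : ℕ) : (ℤ → ℝ) →L[ℝ] ℝ :=
  ∑ j ∈ Finset.range ℓ, (((ℓ : ℝ) - j) / ℓ) •
    ∑ x ∈ Finset.Icc (-(n : ℤ) - j) (n + j), ContinuousLinearMap.proj x

lemma coe_phiCLM (n ℓ : ℕ) : ⇑(phiCLM n ℓ) = phiFun n ℓ := by
  ext ξ
  simp [phiCLM, phiFun]

lemma sum_Icc_discreteLaplacian {G : Type*} [AddCommGroup G] (ξ : ℤ → G) {a b : ℤ}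
    (hab : a ≤ b + 1) :
    ∑ x ∈ Finset.Icc a b, discreteLaplacian ξ x = (ξ (b + 1) - ξ b) + (ξ (a - 1) - ξ a) := by
  have hab' : a - 1 ≤ b := by lia
  induction b, hab' using Int.leInduction with
  | base => simp
  | succ b hb ih =>
    rw [← Finset.insert_Icc_right_eq_Icc_add_one (by lia), Finset.sum_insert (by simp),
      ih (by lia), discreteLaplacian, add_sub_cancel_right]
    abel

lemma sum_range_sub_mul_sub {R : Type*} [Ring R] (g : ℕ → R) (ℓ : ℕ) :
    ∑ j ∈ Finset.range ℓ, ((ℓ : R) - j) * (g (j + 1) - g j) =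
      ∑ j ∈ Finset.Icc 1 ℓ, g j - ℓ * g 0 := by
  induction ℓ with
  | zero => simp
  | succ k ih =>
    have weight_succ (j : ℕ) : ((k + 1 : ℕ) - j : R) * (g (j + 1) - g j) =
        (k - j) * (g (j + 1) - g j) + (g (j + 1) - g j) := by
      push_cast
      noncomm_ring
    simp only [weight_succ, Finset.sum_add_distrib]
    rw [Finset.sum_range_sub, Finset.sum_range_succ, ih, Finset.sum_Icc_succ_top (by lia)]
    push_cast
    noncomm_ring

lemma phiFun_discreteLaplacian (ξ : ℤ → ℝ) (n : ℕ) {ℓ : ℕ} (hℓ : ℓ ≠ 0) :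
    phiFun n ℓ (discreteLaplacian ξ) =
      1 / ℓ * ∑ j ∈ Finset.Icc 1 ℓ, (ξ (n + j) + ξ (-n - j)) - (ξ n + ξ (-n)) := by
  let g (j : ℕ) : ℝ := ξ (n + j) + ξ (-n - j)
  have window_sum (j : ℕ) :
      ∑ x ∈ Finset.Icc (-(n : ℤ) - j) (n + j), discreteLaplacian ξ x = g (j + 1) - g j := by
    rw [sum_Icc_discreteLaplacian ξ (by lia)]
    simp only [g, Nat.cast_add, Nat.cast_one, ← add_assoc, ← sub_sub]
    ring
  calc phiFun n ℓ (discreteLaplacian ξ)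
      = 1 / ℓ * ∑ j ∈ Finset.range ℓ, ((ℓ : ℝ) - j) * (g (j + 1) - g j) := by
        simp only [phiFun, window_sum, Finset.mul_sum]
        exact Finset.sum_congr rfl fun j _ => by ring
    _ = 1 / ℓ * (∑ j ∈ Finset.Icc 1 ℓ, g j - ℓ * g 0) := by rw [sum_range_sub_mul_sub]
    _ = 1 / ℓ * ∑ j ∈ Finset.Icc 1 ℓ, g j - g 0 := by field_simp
    _ = _ := by simp [g]

/-- `(2 − λξ_0)(ξ_n − vec{ξ}_n^ℓ + ξ_{−n} − lvec{ξ}_{−n}^ℓ) = −Lφ_{n,ℓ}(ξ)`,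
where `vec{ξ}_n^ℓ = (ξ_{n+1} + ⋯ + ξ_{n+ℓ})/ℓ` and `lvec{ξ}_{−n}^ℓ = (ξ_{−n−1} + ⋯ + ξ_{−n−ℓ})/ℓ`. -/
theorem envGen_phi (lam : ℝ) (ξ : ℤ → ℝ) (n ℓ : ℕ) (hn : 1 ≤ n) (hℓ : 1 ≤ ℓ) :
    (2 - lam * ξ 0) *
        (ξ (n : ℤ) - (1 / (ℓ : ℝ)) * ∑ j ∈ Finset.Icc 1 ℓ, ξ ((n : ℤ) + (j : ℤ)) +
          ξ (-(n : ℤ)) - (1 / (ℓ : ℝ)) * ∑ j ∈ Finset.Icc 1 ℓ, ξ (-(n : ℤ) - (j : ℤ))) =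
      -envGen lam (phiFun n ℓ) ξ := by
  rw [← coe_phiCLM, envGen_continuousLinearMap, coe_phiCLM,
    phiFun_discreteLaplacian ξ n (Nat.one_le_iff_ne_zero.1 hℓ), Finset.sum_add_distrib]
  ring
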